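/- There is a sequence of cut-free Lε-proofs of end-sequents S_i such that: (1) the size of S_i is polynomial in i; (2) each S_i is the epsilon translation of a first-order sequent S'_i containing weak quantifiers only; (3) the size of these cut-free Lε-proofs is polynomially bounded in i; and (4) there is no elementary function of i bounding the size of the smallest cut-free LK-proofs of S'_i. Hence cut-free Lε-proofs give a non-elementary speed-up over cut-free LK-proofs. -/

import Mathlib

namespace EpsCalc

/-! ## Syntax: terms and formulas of first-order logic extended by epsilon terms.
We use a locally nameless representation: `bvar` are de Bruijn indices for bound
variables (bound by `all`, `ex`, or `eps`), `fvar` are named free variables. -/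

mutual
inductive Tm : Type where
  | bvar : ℕ → Tm
  | fvar : ℕ → Tm
  | func : ℕ → Tms → Tm
  | eps  : Fm → Tm          -- the epsilon term ε_x A(x)

inductive Tms : Type where
  | nil  : Tms
  | cons : Tm → Tms → Tms

inductive Fm : Type where
  | atom : ℕ → Tms → Fm
  | and  : Fm → Fm → Fm
  | or   : Fm → Fm → Fm
  | imp  : Fm → Fm → Fm
  | not  : Fm → Fm
  | all  : Fm → Fm          -- ∀ binding de Bruijn index 0
  | ex   : Fm → Fm          -- ∃ binding de Bruijn index 0
end

/-! lifting of bound variables (shift indices ≥ k by one) -/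
mutual
def liftT (k : ℕ) : Tm → Tm
  | .bvar n => if n < k then .bvar n else .bvar (n+1)
  | .fvar a => .fvar a
  | .func f ts => .func f (liftTs k ts)
  | .eps A => .eps (liftF (k+1) A)
def liftTs (k : ℕ) : Tms → Tms
  | .nil => .nil
  | .cons t ts => .cons (liftT k t) (liftTs k ts)
def liftF (k : ℕ) : Fm → Fm
  | .atom p ts => .atom p (liftTs k ts)
  | .and A B => .and (liftF k A) (liftF k B)
  | .or A B => .or (liftF k A) (liftF k B)
  | .imp A B => .imp (liftF k A) (liftF k B)
  | .not A => .not (liftF k A)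
  | .all A => .all (liftF (k+1) A)
  | .ex A => .ex (liftF (k+1) A)
end

/-! substitution of a term for the bound variable k -/
mutual
def subT (k : ℕ) (u : Tm) : Tm → Tm
  | .bvar n => if n = k then u else if n < k then .bvar n else .bvar (n-1)
  | .fvar a => .fvar a
  | .func f ts => .func f (subTs k u ts)
  | .eps A => .eps (subF (k+1) (liftT 0 u) A)
def subTs (k : ℕ) (u : Tm) : Tms → Tms
  | .nil => .nil
  | .cons t ts => .cons (subT k u t) (subTs k u ts)
def subF (k : ℕ) (u : Tm) : Fm → Fm
  | .atom p ts => .atom p (subTs k u ts)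
  | .and A B => .and (subF k u A) (subF k u B)
  | .or A B => .or (subF k u A) (subF k u B)
  | .imp A B => .imp (subF k u A) (subF k u B)
  | .not A => .not (subF k u A)
  | .all A => .all (subF (k+1) (liftT 0 u) A)
  | .ex A => .ex (subF (k+1) (liftT 0 u) A)
end

/-- instantiate the outermost bound variable of `A` with the term `t`:  A(t) -/
def inst0 (A : Fm) (t : Tm) : Fm := subF 0 t A

/-! substitution of a term for a *free* variable -/
mutual
def sfvT (a : ℕ) (u : Tm) : Tm → Tm
  | .bvar n => .bvar n
  | .fvar b => if b = a then u else .fvar b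
  | .func f ts => .func f (sfvTs a u ts)
  | .eps A => .eps (sfvF a (liftT 0 u) A)
def sfvTs (a : ℕ) (u : Tm) : Tms → Tms
  | .nil => .nil
  | .cons t ts => .cons (sfvT a u t) (sfvTs a u ts)
def sfvF (a : ℕ) (u : Tm) : Fm → Fm
  | .atom p ts => .atom p (sfvTs a u ts)
  | .and A B => .and (sfvF a u A) (sfvF a u B)
  | .or A B => .or (sfvF a u A) (sfvF a u B)
  | .imp A B => .imp (sfvF a u A) (sfvF a u B)
  | .not A => .not (sfvF a u A)
  | .all A => .all (sfvF a (liftT 0 u) A)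
  | .ex A => .ex (sfvF a (liftT 0 u) A)
end

/-! abstraction of a free variable into a bound variable (for universal closure) -/
mutual
def abT (a k : ℕ) : Tm → Tm
  | .bvar n => .bvar n
  | .fvar b => if b = a then .bvar k else .fvar b
  | .func f ts => .func f (abTs a k ts)
  | .eps A => .eps (abF a (k+1) A)
def abTs (a k : ℕ) : Tms → Tms
  | .nil => .nil
  | .cons t ts => .cons (abT a k t) (abTs a k ts)
def abF (a k : ℕ) : Fm → Fm
  | .atom p ts => .atom p (abTs a k ts)
  | .and A B => .and (abF a k A) (abF a k B)
  | .or A B => .or (abF a k A) (abF a k B)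
  | .imp A B => .imp (abF a k A) (abF a k B)
  | .not A => .not (abF a k A)
  | .all A => .all (abF a (k+1) A)
  | .ex A => .ex (abF a (k+1) A)
end

/-! free variables -/
mutual
def fvT : Tm → List ℕ
  | .bvar _ => []
  | .fvar a => [a]
  | .func _ ts => fvTs ts
  | .eps A => fvF A
def fvTs : Tms → List ℕ
  | .nil => []
  | .cons t ts => fvT t ++ fvTs ts
def fvF : Fm → List ℕ
  | .atom _ ts => fvTs ts
  | .and A B => fvF A ++ fvF B
  | .or A B => fvF A ++ fvF B
  | .imp A B => fvF A ++ fvF B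
  | .not A => fvF A
  | .all A => fvF A
  | .ex A => fvF A
end

/-! function symbols occurring in an expression -/
mutual
def fsT : Tm → List ℕ
  | .bvar _ => []
  | .fvar _ => []
  | .func f ts => f :: fsTs ts
  | .eps A => fsF A
def fsTs : Tms → List ℕ
  | .nil => []
  | .cons t ts => fsT t ++ fsTs ts
def fsF : Fm → List ℕ
  | .atom _ ts => fsTs ts
  | .and A B => fsF A ++ fsF B
  | .or A B => fsF A ++ fsF B
  | .imp A B => fsF A ++ fsF B
  | .not A => fsF A
  | .all A => fsF A
  | .ex A => fsF A
end

/-! number of symbols (size) -/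
mutual
def szT : Tm → ℕ
  | .bvar _ => 1
  | .fvar _ => 1
  | .func _ ts => 1 + szTs ts
  | .eps A => 1 + szF A
def szTs : Tms → ℕ
  | .nil => 0
  | .cons t ts => szT t + szTs ts
def szF : Fm → ℕ
  | .atom _ ts => 1 + szTs ts
  | .and A B => 1 + szF A + szF B
  | .or A B => 1 + szF A + szF B
  | .imp A B => 1 + szF A + szF B
  | .not A => 1 + szF A
  | .all A => 1 + szF A
  | .ex A => 1 + szF A
end

/-! epsilon-freeness (first-order language) and quantifier-freeness (epsilon language) -/
mutual
def noEpsT : Tm → Bool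
  | .bvar _ => true
  | .fvar _ => true
  | .func _ ts => noEpsTs ts
  | .eps _ => false
def noEpsTs : Tms → Bool
  | .nil => true
  | .cons t ts => noEpsT t && noEpsTs ts
def noEpsF : Fm → Bool
  | .atom _ ts => noEpsTs ts
  | .and A B => noEpsF A && noEpsF B
  | .or A B => noEpsF A && noEpsF B
  | .imp A B => noEpsF A && noEpsF B
  | .not A => noEpsF A
  | .all A => noEpsF A
  | .ex A => noEpsF A
end

/-- `A` is a formula of the first-order language: it contains no epsilon terms. -/
def isFO (A : Fm) : Bool := noEpsF A

/-- quantifier-freeness: `A` belongs to the language of the epsilon calculus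
(propositional language over epsilon terms) iff `qfree A`. -/
def qfree : Fm → Bool
  | .atom _ _ => true
  | .and A B => qfree A && qfree B
  | .or A B => qfree A && qfree B
  | .imp A B => qfree A && qfree B
  | .not A => qfree A
  | .all _ => false
  | .ex _ => false

/-- The epsilon translation [A]^ε of a formula. -/
def epsT : Fm → Fm
  | .atom p ts => .atom p ts
  | .and A B => .and (epsT A) (epsT B)
  | .or A B => .or (epsT A) (epsT B)
  | .imp A B => .imp (epsT A) (epsT B)
  | .not A => .not (epsT A)
  | .ex A => inst0 (epsT A) (.eps (epsT A))
  | .all A => inst0 (epsT A) (.eps (.not (epsT A)))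

/-! ## The matrix A^M of a formula: delete all quantifiers and replace the
variables bound by them by fresh free variables. -/
mutual
def mxT (b d : ℕ) : Tm → Tm
  | .bvar n => if n < d then .fvar (b + (d - 1 - n)) else .bvar (n - d)
  | .fvar a => .fvar a
  | .func f ts => .func f (mxTs b d ts)
  | .eps A => .eps A          -- (the matrix is only used on epsilon-free formulas)
def mxTs (b d : ℕ) : Tms → Tms
  | .nil => .nil
  | .cons t ts => .cons (mxT b d t) (mxTs b d ts)
def mxF (b d : ℕ) : Fm → Fm
  | .atom p ts => .atom p (mxTs b d ts)
  | .and A B => .and (mxF b d A) (mxF b d B)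
  | .or A B => .or (mxF b d A) (mxF b d B)
  | .imp A B => .imp (mxF b d A) (mxF b d B)
  | .not A => .not (mxF b d A)
  | .all A => mxF b (d+1) A
  | .ex A => mxF b (d+1) A
end

def maxFv (A : Fm) : ℕ := (fvF A).foldr max 0

/-- the matrix A^M of A -/
def matrix (A : Fm) : Fm := mxF (maxFv A + 1) 0 A

/-- universal closure ∀x̄ A over all free variables of A -/
def uclose (A : Fm) : Fm :=
  ((fvF A).dedup).foldr (fun a B => Fm.all (abF a 0 B)) A

/-! ## Weak/strong quantifier occurrences.
`posW A` : all quantifier occurrences of `A` are weak when `A` occurs in the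
succedent; `negW A` : likewise for the antecedent. -/
mutual
def posW : Fm → Bool
  | .atom _ _ => true
  | .and A B => posW A && posW B
  | .or A B => posW A && posW B
  | .imp A B => negW A && posW B
  | .not A => negW A
  | .all _ => false
  | .ex A => posW A
def negW : Fm → Bool
  | .atom _ _ => true
  | .and A B => negW A && negW B
  | .or A B => negW A && negW B
  | .imp A B => posW A && negW B
  | .not A => posW A
  | .all A => negW A
  | .ex _ => false
end

/-- the sequent Γ ⊢ Δ contains weak quantifier occurrences only -/
def WeakSeq (Γ Δ : List Fm) : Prop :=
  (∀ A ∈ Γ, negW A = true) ∧ (∀ A ∈ Δ, posW A = true)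

/-- the sequent Γ ⊢ Δ is in the first-order language -/
def FOSeq (Γ Δ : List Fm) : Prop :=
  (∀ A ∈ Γ, isFO A = true) ∧ (∀ A ∈ Δ, isFO A = true)

/-- the sequent Γ ⊢ Δ is in the language of the epsilon calculus -/
def EpsSeq (Γ Δ : List Fm) : Prop :=
  (∀ A ∈ Γ, qfree A = true) ∧ (∀ A ∈ Δ, qfree A = true)

def fvSeq (Γ Δ : List Fm) : List ℕ :=
  (Γ ++ Δ).foldr (fun A l => fvF A ++ l) []

def fsSeq (Γ Δ : List Fm) : List ℕ :=
  (Γ ++ Δ).foldr (fun A l => fsF A ++ l) []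

def seqSize (Γ Δ : List Fm) : ℕ :=
  (Γ ++ Δ).foldr (fun A n => szF A + n) 0


/-! ## LK derivation trees.
`Deriv Γ Δ` are derivation trees of the sequent Γ ⊢ Δ built from the rules of
Gentzen's LK, where the strong quantifier rules `allR`/`exL` carry an
eigenvariable but *no* correctness condition; the various eigenvariable
disciplines (LK, LK⁺, LK⁺⁺) are imposed as predicates on the trees below. -/
inductive Deriv : List Fm → List Fm → Type where
  | ax (A : Fm) : Deriv [A] [A]
  | andL (A B : Fm) (Γ Δ : List Fm) :
      Deriv (A :: B :: Γ) Δ → Deriv (Fm.and A B :: Γ) Δ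
  | andR (A B : Fm) (Γ₁ Δ₁ Γ₂ Δ₂ : List Fm) :
      Deriv Γ₁ (A :: Δ₁) → Deriv Γ₂ (B :: Δ₂) →
      Deriv (Γ₁ ++ Γ₂) (Fm.and A B :: (Δ₁ ++ Δ₂))
  | orL (A B : Fm) (Γ₁ Δ₁ Γ₂ Δ₂ : List Fm) :
      Deriv (A :: Γ₁) Δ₁ → Deriv (B :: Γ₂) Δ₂ →
      Deriv (Fm.or A B :: (Γ₁ ++ Γ₂)) (Δ₁ ++ Δ₂)
  | orR (A B : Fm) (Γ Δ : List Fm) :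
      Deriv Γ (A :: B :: Δ) → Deriv Γ (Fm.or A B :: Δ)
  | impL (A B : Fm) (Γ₁ Δ₁ Γ₂ Δ₂ : List Fm) :
      Deriv Γ₁ (A :: Δ₁) → Deriv (B :: Γ₂) Δ₂ →
      Deriv (Fm.imp A B :: (Γ₁ ++ Γ₂)) (Δ₁ ++ Δ₂)
  | impR (A B : Fm) (Γ Δ : List Fm) :
      Deriv (A :: Γ) (B :: Δ) → Deriv Γ (Fm.imp A B :: Δ)
  | notL (A : Fm) (Γ Δ : List Fm) :
      Deriv Γ (A :: Δ) → Deriv (Fm.not A :: Γ) Δ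
  | notR (A : Fm) (Γ Δ : List Fm) :
      Deriv (A :: Γ) Δ → Deriv Γ (Fm.not A :: Δ)
  | wL (A : Fm) (Γ Δ : List Fm) : Deriv Γ Δ → Deriv (A :: Γ) Δ
  | wR (A : Fm) (Γ Δ : List Fm) : Deriv Γ Δ → Deriv Γ (A :: Δ)
  | cL (A : Fm) (Γ Δ : List Fm) : Deriv (A :: A :: Γ) Δ → Deriv (A :: Γ) Δ
  | cR (A : Fm) (Γ Δ : List Fm) : Deriv Γ (A :: A :: Δ) → Deriv Γ (A :: Δ)
  | cut (A : Fm) (Γ₁ Δ₁ Γ₂ Δ₂ : List Fm) :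
      Deriv Γ₁ (A :: Δ₁) → Deriv (A :: Γ₂) Δ₂ →
      Deriv (Γ₁ ++ Γ₂) (Δ₁ ++ Δ₂)
  | allL (t : Tm) (A : Fm) (Γ Δ : List Fm) :
      Deriv (inst0 A t :: Γ) Δ → Deriv (Fm.all A :: Γ) Δ
  | allR (a : ℕ) (A : Fm) (Γ Δ : List Fm) :
      Deriv Γ (inst0 A (Tm.fvar a) :: Δ) → Deriv Γ (Fm.all A :: Δ)
  | exL (a : ℕ) (A : Fm) (Γ Δ : List Fm) :
      Deriv (inst0 A (Tm.fvar a) :: Γ) Δ → Deriv (Fm.ex A :: Γ) Δ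
  | exR (t : Tm) (A : Fm) (Γ Δ : List Fm) :
      Deriv Γ (inst0 A t :: Δ) → Deriv Γ (Fm.ex A :: Δ)
  | permL (Γ Γ' Δ : List Fm) : Γ.Perm Γ' → Deriv Γ Δ → Deriv Γ' Δ
  | permR (Γ Δ Δ' : List Fm) : Δ.Perm Δ' → Deriv Γ Δ → Deriv Γ Δ'

namespace Deriv

/-- the size of a derivation: the number of inference steps occurring in it -/
def size : ∀ {Γ Δ}, Deriv Γ Δ → ℕ
  | _, _, ax _ => 1
  | _, _, andL _ _ _ _ d => d.size + 1
  | _, _, andR _ _ _ _ _ _ d e => d.size + e.size + 1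
  | _, _, orL _ _ _ _ _ _ d e => d.size + e.size + 1
  | _, _, orR _ _ _ _ d => d.size + 1
  | _, _, impL _ _ _ _ _ _ d e => d.size + e.size + 1
  | _, _, impR _ _ _ _ d => d.size + 1
  | _, _, notL _ _ _ d => d.size + 1
  | _, _, notR _ _ _ d => d.size + 1
  | _, _, wL _ _ _ d => d.size + 1
  | _, _, wR _ _ _ d => d.size + 1
  | _, _, cL _ _ _ d => d.size + 1
  | _, _, cR _ _ _ d => d.size + 1
  | _, _, cut _ _ _ _ _ d e => d.size + e.size + 1
  | _, _, allL _ _ _ _ d => d.size + 1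
  | _, _, allR _ _ _ _ d => d.size + 1
  | _, _, exL _ _ _ _ d => d.size + 1
  | _, _, exR _ _ _ _ d => d.size + 1
  | _, _, permL _ _ _ _ d => d.size + 1
  | _, _, permR _ _ _ _ d => d.size + 1

/-- the list of cut formulas occurring in a derivation -/
def cutFms : ∀ {Γ Δ}, Deriv Γ Δ → List Fm
  | _, _, ax _ => []
  | _, _, andL _ _ _ _ d => d.cutFms
  | _, _, andR _ _ _ _ _ _ d e => d.cutFms ++ e.cutFms
  | _, _, orL _ _ _ _ _ _ d e => d.cutFms ++ e.cutFms
  | _, _, orR _ _ _ _ d => d.cutFms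
  | _, _, impL _ _ _ _ _ _ d e => d.cutFms ++ e.cutFms
  | _, _, impR _ _ _ _ d => d.cutFms
  | _, _, notL _ _ _ d => d.cutFms
  | _, _, notR _ _ _ d => d.cutFms
  | _, _, wL _ _ _ d => d.cutFms
  | _, _, wR _ _ _ d => d.cutFms
  | _, _, cL _ _ _ d => d.cutFms
  | _, _, cR _ _ _ d => d.cutFms
  | _, _, cut A _ _ _ _ d e => A :: (d.cutFms ++ e.cutFms)
  | _, _, allL _ _ _ _ d => d.cutFms
  | _, _, allR _ _ _ _ d => d.cutFms
  | _, _, exL _ _ _ _ d => d.cutFms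
  | _, _, exR _ _ _ _ d => d.cutFms
  | _, _, permL _ _ _ _ d => d.cutFms
  | _, _, permR _ _ _ _ d => d.cutFms

/-- data of the strong quantifier inferences of a derivation:
(eigenvariable, auxiliary formula, main formula) -/
def strongs : ∀ {Γ Δ}, Deriv Γ Δ → List (ℕ × Fm × Fm)
  | _, _, ax _ => []
  | _, _, andL _ _ _ _ d => d.strongs
  | _, _, andR _ _ _ _ _ _ d e => d.strongs ++ e.strongs
  | _, _, orL _ _ _ _ _ _ d e => d.strongs ++ e.strongs
  | _, _, orR _ _ _ _ d => d.strongs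
  | _, _, impL _ _ _ _ _ _ d e => d.strongs ++ e.strongs
  | _, _, impR _ _ _ _ d => d.strongs
  | _, _, notL _ _ _ d => d.strongs
  | _, _, notR _ _ _ d => d.strongs
  | _, _, wL _ _ _ d => d.strongs
  | _, _, wR _ _ _ d => d.strongs
  | _, _, cL _ _ _ d => d.strongs
  | _, _, cR _ _ _ d => d.strongs
  | _, _, cut _ _ _ _ _ d e => d.strongs ++ e.strongs
  | _, _, allL _ _ _ _ d => d.strongs
  | _, _, allR a A _ _ d => (a, inst0 A (Tm.fvar a), Fm.all A) :: d.strongs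
  | _, _, exL a A _ _ d => (a, inst0 A (Tm.fvar a), Fm.ex A) :: d.strongs
  | _, _, exR _ _ _ _ d => d.strongs
  | _, _, permL _ _ _ _ d => d.strongs
  | _, _, permR _ _ _ _ d => d.strongs

/-- the standard (local) eigenvariable conditions of LK: the eigenvariable of a
strong quantifier inference does not occur free in its conclusion -/
def Std : ∀ {Γ Δ}, Deriv Γ Δ → Prop
  | _, _, ax _ => True
  | _, _, andL _ _ _ _ d => d.Std
  | _, _, andR _ _ _ _ _ _ d e => d.Std ∧ e.Std
  | _, _, orL _ _ _ _ _ _ d e => d.Std ∧ e.Std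
  | _, _, orR _ _ _ _ d => d.Std
  | _, _, impL _ _ _ _ _ _ d e => d.Std ∧ e.Std
  | _, _, impR _ _ _ _ d => d.Std
  | _, _, notL _ _ _ d => d.Std
  | _, _, notR _ _ _ d => d.Std
  | _, _, wL _ _ _ d => d.Std
  | _, _, wR _ _ _ d => d.Std
  | _, _, cL _ _ _ d => d.Std
  | _, _, cR _ _ _ d => d.Std
  | _, _, cut _ _ _ _ _ d e => d.Std ∧ e.Std
  | _, _, allL _ _ _ _ d => d.Std
  | _, _, allR a A Γ Δ d => a ∉ fvSeq Γ (Fm.all A :: Δ) ∧ d.Std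
  | _, _, exL a A Γ Δ d => a ∉ fvSeq (Fm.ex A :: Γ) Δ ∧ d.Std
  | _, _, exR _ _ _ _ d => d.Std
  | _, _, permL _ _ _ _ d => d.Std
  | _, _, permR _ _ _ _ d => d.Std

end Deriv

/-- the side variable relation `<_φ`: `b` is a side variable of `a` in `φ` if `φ`
contains a strong quantifier inference with eigenvariable `a` whose auxiliary
formula contains the free variable `b` -/
def sideRel {Γ Δ} (d : Deriv Γ Δ) (a b : ℕ) : Prop :=
  ∃ e ∈ d.strongs, e.1 = a ∧ b ∈ fvF e.2.1 ∧ b ≠ a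

/-- acyclicity of a binary relation -/
def Acyc (r : ℕ → ℕ → Prop) : Prop := ∀ x, ¬ Relation.TransGen r x x

/-- LK⁺-suitability of (all strong quantifier inferences of) a derivation:
substitutability, the side variable condition, and weak regularity. -/
def SuitP {Γ Δ} (d : Deriv Γ Δ) : Prop :=
  (∀ e ∈ d.strongs, e.1 ∉ fvSeq Γ Δ) ∧
  Acyc (sideRel d) ∧
  (d.strongs.map (·.1)).Nodup

/-- LK⁺⁺-suitability: substitutability, the side variable condition, and very
weak regularity (equal eigenvariables only for equal main formulas). -/
def SuitPP {Γ Δ} (d : Deriv Γ Δ) : Prop :=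
  (∀ e ∈ d.strongs, e.1 ∉ fvSeq Γ Δ) ∧
  Acyc (sideRel d) ∧
  (∀ e₁ ∈ d.strongs, ∀ e₂ ∈ d.strongs, e₁.1 = e₂.1 → e₁.2.2 = e₂.2.2)

/-! ## The sequent calculus Lε of the epsilon calculus:
atomic axioms, the propositional, structural and cut rules of LK, the weak
quantifier rules ∃_r and ∀_l producing epsilon terms, and a substitution rule
replacing the strong quantifier inferences. -/
inductive EDeriv : List Fm → List Fm → Type where
  | ax (p : ℕ) (ts : Tms) : EDeriv [Fm.atom p ts] [Fm.atom p ts]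
  | andL (A B : Fm) (Γ Δ : List Fm) :
      EDeriv (A :: B :: Γ) Δ → EDeriv (Fm.and A B :: Γ) Δ
  | andR (A B : Fm) (Γ₁ Δ₁ Γ₂ Δ₂ : List Fm) :
      EDeriv Γ₁ (A :: Δ₁) → EDeriv Γ₂ (B :: Δ₂) →
      EDeriv (Γ₁ ++ Γ₂) (Fm.and A B :: (Δ₁ ++ Δ₂))
  | orL (A B : Fm) (Γ₁ Δ₁ Γ₂ Δ₂ : List Fm) :
      EDeriv (A :: Γ₁) Δ₁ → EDeriv (B :: Γ₂) Δ₂ →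
      EDeriv (Fm.or A B :: (Γ₁ ++ Γ₂)) (Δ₁ ++ Δ₂)
  | orR (A B : Fm) (Γ Δ : List Fm) :
      EDeriv Γ (A :: B :: Δ) → EDeriv Γ (Fm.or A B :: Δ)
  | impL (A B : Fm) (Γ₁ Δ₁ Γ₂ Δ₂ : List Fm) :
      EDeriv Γ₁ (A :: Δ₁) → EDeriv (B :: Γ₂) Δ₂ →
      EDeriv (Fm.imp A B :: (Γ₁ ++ Γ₂)) (Δ₁ ++ Δ₂)
  | impR (A B : Fm) (Γ Δ : List Fm) :
      EDeriv (A :: Γ) (B :: Δ) → EDeriv Γ (Fm.imp A B :: Δ)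
  | notL (A : Fm) (Γ Δ : List Fm) :
      EDeriv Γ (A :: Δ) → EDeriv (Fm.not A :: Γ) Δ
  | notR (A : Fm) (Γ Δ : List Fm) :
      EDeriv (A :: Γ) Δ → EDeriv Γ (Fm.not A :: Δ)
  | wL (A : Fm) (Γ Δ : List Fm) : EDeriv Γ Δ → EDeriv (A :: Γ) Δ
  | wR (A : Fm) (Γ Δ : List Fm) : EDeriv Γ Δ → EDeriv Γ (A :: Δ)
  | cL (A : Fm) (Γ Δ : List Fm) : EDeriv (A :: A :: Γ) Δ → EDeriv (A :: Γ) Δ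
  | cR (A : Fm) (Γ Δ : List Fm) : EDeriv Γ (A :: A :: Δ) → EDeriv Γ (A :: Δ)
  | cut (A : Fm) (Γ₁ Δ₁ Γ₂ Δ₂ : List Fm) :
      EDeriv Γ₁ (A :: Δ₁) → EDeriv (A :: Γ₂) Δ₂ →
      EDeriv (Γ₁ ++ Γ₂) (Δ₁ ++ Δ₂)
  | allL (t : Tm) (A : Fm) (Γ Δ : List Fm) :
      EDeriv (inst0 A t :: Γ) Δ →
      EDeriv (inst0 A (Tm.eps (Fm.not A)) :: Γ) Δ
  | exR (t : Tm) (A : Fm) (Γ Δ : List Fm) :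
      EDeriv Γ (inst0 A t :: Δ) →
      EDeriv Γ (inst0 A (Tm.eps A) :: Δ)
  | subst (a : ℕ) (t : Tm) (Γ Δ : List Fm) :
      EDeriv Γ Δ → EDeriv (Γ.map (sfvF a t)) (Δ.map (sfvF a t))
  | permL (Γ Γ' Δ : List Fm) : Γ.Perm Γ' → EDeriv Γ Δ → EDeriv Γ' Δ
  | permR (Γ Δ Δ' : List Fm) : Δ.Perm Δ' → EDeriv Γ Δ → EDeriv Γ Δ'

namespace EDeriv

/-- the size of an Lε derivation -/
def size : ∀ {Γ Δ}, EDeriv Γ Δ → ℕ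
  | _, _, ax _ _ => 1
  | _, _, andL _ _ _ _ d => d.size + 1
  | _, _, andR _ _ _ _ _ _ d e => d.size + e.size + 1
  | _, _, orL _ _ _ _ _ _ d e => d.size + e.size + 1
  | _, _, orR _ _ _ _ d => d.size + 1
  | _, _, impL _ _ _ _ _ _ d e => d.size + e.size + 1
  | _, _, impR _ _ _ _ d => d.size + 1
  | _, _, notL _ _ _ d => d.size + 1
  | _, _, notR _ _ _ d => d.size + 1
  | _, _, wL _ _ _ d => d.size + 1
  | _, _, wR _ _ _ d => d.size + 1
  | _, _, cL _ _ _ d => d.size + 1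
  | _, _, cR _ _ _ d => d.size + 1
  | _, _, cut _ _ _ _ _ d e => d.size + e.size + 1
  | _, _, allL _ _ _ _ d => d.size + 1
  | _, _, exR _ _ _ _ d => d.size + 1
  | _, _, subst _ _ _ _ d => d.size + 1
  | _, _, permL _ _ _ _ d => d.size + 1
  | _, _, permR _ _ _ _ d => d.size + 1

/-- the list of cut formulas occurring in an Lε derivation -/
def cutFms : ∀ {Γ Δ}, EDeriv Γ Δ → List Fm
  | _, _, ax _ _ => []
  | _, _, andL _ _ _ _ d => d.cutFms
  | _, _, andR _ _ _ _ _ _ d e => d.cutFms ++ e.cutFms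
  | _, _, orL _ _ _ _ _ _ d e => d.cutFms ++ e.cutFms
  | _, _, orR _ _ _ _ d => d.cutFms
  | _, _, impL _ _ _ _ _ _ d e => d.cutFms ++ e.cutFms
  | _, _, impR _ _ _ _ d => d.cutFms
  | _, _, notL _ _ _ d => d.cutFms
  | _, _, notR _ _ _ d => d.cutFms
  | _, _, wL _ _ _ d => d.cutFms
  | _, _, wR _ _ _ d => d.cutFms
  | _, _, cL _ _ _ d => d.cutFms
  | _, _, cR _ _ _ d => d.cutFms
  | _, _, cut A _ _ _ _ d e => A :: (d.cutFms ++ e.cutFms)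
  | _, _, allL _ _ _ _ d => d.cutFms
  | _, _, exR _ _ _ _ d => d.cutFms
  | _, _, subst _ _ _ _ d => d.cutFms
  | _, _, permL _ _ _ _ d => d.cutFms
  | _, _, permR _ _ _ _ d => d.cutFms

end EDeriv

/-! ## Elementary functions and polynomial bounds -/

/-- `iterExp k n` is the `k`-fold iterated exponential 2^2^...^n. -/
def iterExp : ℕ → ℕ → ℕ
  | 0, n => n
  | k+1, n => 2 ^ iterExp k n

/-- A function ℕ → ℕ is elementary (in the sense of Kalmár: definable by a
quantifier-free formula from +, ×, and x ↦ 2^x) iff it is majorized by some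
fixed iterated exponential; we use this growth-rate characterization. -/
def IsElementary (f : ℕ → ℕ) : Prop := ∃ k, ∀ n, f n ≤ iterExp k n

/-- `g` is polynomially bounded -/
def PolyBdd (g : ℕ → ℕ) : Prop := ∃ p : Polynomial ℕ, ∀ n, g n ≤ p.eval n

/-! ## Skolemization (relationally): `SkP F A B` (`SkN F A B`) holds if `B` is
obtained from `A`, occurring in the succedent (antecedent), by replacing the
strong quantifiers by terms built from fresh function symbols in `F`. -/
mutual
inductive SkP (F : ℕ → Prop) : Fm → Fm → Prop where
  | atom (p ts) : SkP F (Fm.atom p ts) (Fm.atom p ts)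
  | and {A A' B B'} : SkP F A A' → SkP F B B' → SkP F (Fm.and A B) (Fm.and A' B')
  | or {A A' B B'} : SkP F A A' → SkP F B B' → SkP F (Fm.or A B) (Fm.or A' B')
  | imp {A A' B B'} : SkN F A A' → SkP F B B' → SkP F (Fm.imp A B) (Fm.imp A' B')
  | not {A A'} : SkN F A A' → SkP F (Fm.not A) (Fm.not A')
  | ex {A A'} : SkP F A A' → SkP F (Fm.ex A) (Fm.ex A')
  | all {A B} (f : ℕ) (ts : Tms) : F f →
      SkP F (inst0 A (Tm.func f ts)) B → SkP F (Fm.all A) B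
inductive SkN (F : ℕ → Prop) : Fm → Fm → Prop where
  | atom (p ts) : SkN F (Fm.atom p ts) (Fm.atom p ts)
  | and {A A' B B'} : SkN F A A' → SkN F B B' → SkN F (Fm.and A B) (Fm.and A' B')
  | or {A A' B B'} : SkN F A A' → SkN F B B' → SkN F (Fm.or A B) (Fm.or A' B')
  | imp {A A' B B'} : SkP F A A' → SkN F B B' → SkN F (Fm.imp A B) (Fm.imp A' B')
  | not {A A'} : SkP F A A' → SkN F (Fm.not A) (Fm.not A')
  | all {A A'} : SkN F A A' → SkN F (Fm.all A) (Fm.all A')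
  | ex {A B} (f : ℕ) (ts : Tms) : F f →
      SkN F (inst0 A (Tm.func f ts)) B → SkN F (Fm.ex A) B
end

/-- `S'` is a Skolemization of the sequent `S` using fresh function symbols from `F` -/
def SkolemSeq (F : ℕ → Prop) (S S' : List Fm × List Fm) : Prop :=
  List.Forall₂ (SkN F) S.1 S'.1 ∧ List.Forall₂ (SkP F) S.2 S'.2

/-!
The sequents are Orevkov's: from axioms for `z = y + 2 ^ x` they derive that there is an
exponential tower of height `n`. Short proofs with cuts go through the formulas `A₀(x) = ⊤` and
`Aᵢ₊₁(x) = ∀ y, Aᵢ(y) → ∃ z, Aᵢ(z) ∧ z = y + 2 ^ x`, which are closed under successor and hold of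
`0`, so that `Aₙ(0)` yields the towers of heights `1, …, n` one after the other. Here `Aᵢ(x)` is
an atom `T(aᵢ(x))` instead, where `T` is a truth predicate and the code `aᵢ(x)` is a term in
which the two quantifiers of `Aᵢ` are replaced by `ε`-terms. Two axioms on `T` and coded
conditionals, used as left rules, then take the place of the cuts.

A cut-free LK-proof of such a sequent contains no strong quantifier inferences. It is therefore
sound even if the quantifiers range over nothing but the terms it instantiates, provided that the
axioms remain true. They do when `z = y + 2 ^ x` is read as the stronger claim that, in
addition, the numbers from `y` up to `z` are in that range. The end-sequent then says that the
instantiated terms cover all the numbers below a tower of height `n`.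
-/

/-! ## Lifting and substitution -/

mutual
theorem liftT_liftT {j k : ℕ} (h : j ≤ k) :
    ∀ t, liftT (k + 1) (liftT j t) = liftT j (liftT k t)
  | .bvar n => by
      simp only [liftT]
      split_ifs <;> simp only [liftT] <;> split_ifs <;> first | rfl | omega
  | .fvar _ => by simp only [liftT]
  | .func _ ts => by simp only [liftT, liftTs_liftTs h ts]
  | .eps A => by simp only [liftT, liftF_liftF (Nat.succ_le_succ h) A]
theorem liftTs_liftTs {j k : ℕ} (h : j ≤ k) :
    ∀ ts, liftTs (k + 1) (liftTs j ts) = liftTs j (liftTs k ts)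
  | .nil => by simp only [liftTs]
  | .cons t ts => by simp only [liftTs, liftT_liftT h t, liftTs_liftTs h ts]
theorem liftF_liftF {j k : ℕ} (h : j ≤ k) :
    ∀ A, liftF (k + 1) (liftF j A) = liftF j (liftF k A)
  | .atom _ ts => by simp only [liftF, liftTs_liftTs h ts]
  | .and A B | .or A B | .imp A B => by simp only [liftF, liftF_liftF h A, liftF_liftF h B]
  | .not A => by simp only [liftF, liftF_liftF h A]
  | .all A | .ex A => by simp only [liftF, liftF_liftF (Nat.succ_le_succ h) A]
end

mutual
theorem subT_liftT_self (k : ℕ) (u : Tm) : ∀ t, subT k u (liftT k t) = t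
  | .bvar n => by
      simp only [liftT]
      split_ifs <;> simp only [subT] <;> split_ifs <;> first | rfl | omega
  | .fvar _ => by simp only [liftT, subT]
  | .func _ ts => by simp only [liftT, subT, subTs_liftTs_self k u ts]
  | .eps A => by simp only [liftT, subT, subF_liftF_self (k + 1) (liftT 0 u) A]
theorem subTs_liftTs_self (k : ℕ) (u : Tm) : ∀ ts, subTs k u (liftTs k ts) = ts
  | .nil => by simp only [liftTs, subTs]
  | .cons t ts => by
      simp only [liftTs, subTs, subT_liftT_self k u t, subTs_liftTs_self k u ts]
theorem subF_liftF_self (k : ℕ) (u : Tm) : ∀ A, subF k u (liftF k A) = A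
  | .atom _ ts => by simp only [liftF, subF, subTs_liftTs_self k u ts]
  | .and A B | .or A B | .imp A B => by
      simp only [liftF, subF, subF_liftF_self k u A, subF_liftF_self k u B]
  | .not A => by simp only [liftF, subF, subF_liftF_self k u A]
  | .all A | .ex A => by simp only [liftF, subF, subF_liftF_self (k + 1) (liftT 0 u) A]
end

mutual
theorem subT_succ_liftT {j k : ℕ} (h : j ≤ k) (u : Tm) :
    ∀ t, subT (k + 1) (liftT j u) (liftT j t) = liftT j (subT k u t)
  | .bvar n => by
      simp only [liftT, subT]
      split_ifs <;> simp only [liftT, subT] <;> split_ifs <;>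
        first | rfl | omega | (congr 1; omega)
  | .fvar _ => by simp only [liftT, subT]
  | .func _ ts => by simp only [liftT, subT, subTs_succ_liftTs h u ts]
  | .eps A => by
      simp only [liftT, subT, ← subF_succ_liftF (Nat.succ_le_succ h) (liftT 0 u) A,
        liftT_liftT (Nat.zero_le j) u]
theorem subTs_succ_liftTs {j k : ℕ} (h : j ≤ k) (u : Tm) :
    ∀ ts, subTs (k + 1) (liftT j u) (liftTs j ts) = liftTs j (subTs k u ts)
  | .nil => by simp only [liftTs, subTs]
  | .cons t ts => by
      simp only [liftTs, subTs, subT_succ_liftT h u t, subTs_succ_liftTs h u ts]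
theorem subF_succ_liftF {j k : ℕ} (h : j ≤ k) (u : Tm) :
    ∀ A, subF (k + 1) (liftT j u) (liftF j A) = liftF j (subF k u A)
  | .atom _ ts => by simp only [liftF, subF, subTs_succ_liftTs h u ts]
  | .and A B | .or A B | .imp A B => by
      simp only [liftF, subF, subF_succ_liftF h u A, subF_succ_liftF h u B]
  | .not A => by simp only [liftF, subF, subF_succ_liftF h u A]
  | .all A | .ex A => by
      simp only [liftF, subF, ← subF_succ_liftF (Nat.succ_le_succ h) (liftT 0 u) A,
        liftT_liftT (Nat.zero_le j) u]
end

mutual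
theorem subT_subT {j k : ℕ} (h : j ≤ k) (u v : Tm) :
    ∀ t, subT k u (subT j v t) = subT j (subT k u v) (subT (k + 1) (liftT j u) t)
  | .bvar n => by
      simp only [subT]
      split_ifs <;> simp only [subT, subT_liftT_self] <;> (try split_ifs) <;> first | rfl | omega
  | .fvar _ => by simp only [subT]
  | .func _ ts => by simp only [subT, subTs_subTs h u v ts]
  | .eps A => by
      simp only [subT, subF_subF (Nat.succ_le_succ h) (liftT 0 u) (liftT 0 v) A,
        liftT_liftT (Nat.zero_le j) u, subT_succ_liftT (Nat.zero_le k) u v]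
theorem subTs_subTs {j k : ℕ} (h : j ≤ k) (u v : Tm) :
    ∀ ts, subTs k u (subTs j v ts) = subTs j (subT k u v) (subTs (k + 1) (liftT j u) ts)
  | .nil => by simp only [subTs]
  | .cons t ts => by simp only [subTs, subT_subT h u v t, subTs_subTs h u v ts]
theorem subF_subF {j k : ℕ} (h : j ≤ k) (u v : Tm) :
    ∀ A, subF k u (subF j v A) = subF j (subT k u v) (subF (k + 1) (liftT j u) A)
  | .atom _ ts => by simp only [subF, subTs_subTs h u v ts]
  | .and A B | .or A B | .imp A B => by
      simp only [subF, subF_subF h u v A, subF_subF h u v B]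
  | .not A => by simp only [subF, subF_subF h u v A]
  | .all A | .ex A => by
      simp only [subF, subF_subF (Nat.succ_le_succ h) (liftT 0 u) (liftT 0 v) A,
        liftT_liftT (Nat.zero_le j) u, subT_succ_liftT (Nat.zero_le k) u v]
end

theorem subF_inst0 (k : ℕ) (u t : Tm) (A : Fm) :
    subF k u (inst0 A t) = inst0 (subF (k + 1) (liftT 0 u) A) (subT k u t) :=
  subF_subF (Nat.zero_le k) u t A

theorem epsT_subF (k : ℕ) (u : Tm) (A : Fm) : epsT (subF k u A) = subF k u (epsT A) := by
  fun_induction epsT A generalizing k u <;> simp_all only [subF, epsT, subF_inst0, subT]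

mutual
theorem posW_subF (k : ℕ) (u : Tm) : ∀ A, posW (subF k u A) = posW A
  | .atom _ _ | .all _ => by simp only [subF, posW]
  | .and A B | .or A B => by simp only [subF, posW, posW_subF k u A, posW_subF k u B]
  | .imp A B => by simp only [subF, posW, negW_subF k u A, posW_subF k u B]
  | .not A => by simp only [subF, posW, negW_subF k u A]
  | .ex A => by simp only [subF, posW, posW_subF (k + 1) (liftT 0 u) A]
theorem negW_subF (k : ℕ) (u : Tm) : ∀ A, negW (subF k u A) = negW A
  | .atom _ _ | .ex _ => by simp only [subF, negW]
  | .and A B | .or A B => by simp only [subF, negW, negW_subF k u A, negW_subF k u B]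
  | .imp A B => by simp only [subF, negW, posW_subF k u A, negW_subF k u B]
  | .not A => by simp only [subF, negW, posW_subF k u A]
  | .all A => by simp only [subF, negW, negW_subF (k + 1) (liftT 0 u) A]
end

/-! ## Interpretations with a restricted range of quantification -/

/-- An interpretation of terms in `D`. Epsilon terms, which a first-order model need not
understand, all receive the same value `eps`. -/
structure TermInterp (D : Type*) where
  func : ℕ → List D → D
  fvar : ℕ → D
  eps : D

/-- An interpretation of formulas in `D` whose quantifiers range over `dom` only. The set `dom`
need not be closed under the functions, so that it may be finite. -/
structure Interp (D : Type*) extends TermInterp D where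
  pred : ℕ → List D → Prop
  dom : Set D

/-- The assignment of the de Bruijn indices obtained from `e` by binding index `k` to `d`. -/
def insertAt {D : Type*} (k : ℕ) (d : D) (e : ℕ → D) : ℕ → D :=
  fun n => if n = k then d else if n < k then e n else e (n - 1)

section Semantics

variable {D : Type*}

theorem insertAt_succ_insertAt_zero (k : ℕ) (d a : D) (e : ℕ → D) :
    insertAt (k + 1) d (insertAt 0 a e) = insertAt 0 a (insertAt k d e) := by
  funext n
  rcases n with _ | _ | n
  · simp [insertAt]
  · rcases k with _ | k <;> simp [insertAt]
  · simp [insertAt]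

mutual
/-- The value of a term under the assignment `e`. -/
def TermInterp.val (I : TermInterp D) (e : ℕ → D) : Tm → D
  | .bvar n => e n
  | .fvar a => I.fvar a
  | .func f ts => I.func f (I.vals e ts)
  | .eps _ => I.eps
/-- The values of a list of terms under the assignment `e`. -/
def TermInterp.vals (I : TermInterp D) (e : ℕ → D) : Tms → List D
  | .nil => []
  | .cons t ts => I.val e t :: I.vals e ts
end

mutual
theorem TermInterp.val_subT (I : TermInterp D) (e : ℕ → D) (k : ℕ) (u : Tm) :
    ∀ t, I.val e (subT k u t) = I.val (insertAt k (I.val e u) e) t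
  | .bvar n => by
      simp only [subT, TermInterp.val, insertAt]
      split_ifs <;> simp only [TermInterp.val]
  | .fvar _ | .eps _ => by simp only [subT, TermInterp.val]
  | .func _ ts => by simp only [subT, TermInterp.val, I.vals_subTs e k u ts]
theorem TermInterp.vals_subTs (I : TermInterp D) (e : ℕ → D) (k : ℕ) (u : Tm) :
    ∀ ts, I.vals e (subTs k u ts) = I.vals (insertAt k (I.val e u) e) ts
  | .nil => by simp only [subTs, TermInterp.vals]
  | .cons t ts => by
      simp only [subTs, TermInterp.vals, I.val_subT e k u t, I.vals_subTs e k u ts]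
end

mutual
theorem TermInterp.val_liftT (I : TermInterp D) (e : ℕ → D) (d : D) :
    ∀ t, I.val (insertAt 0 d e) (liftT 0 t) = I.val e t
  | .bvar n => by simp [liftT, TermInterp.val, insertAt]
  | .fvar _ | .eps _ => by simp only [liftT, TermInterp.val]
  | .func _ ts => by simp only [liftT, TermInterp.val, I.vals_liftTs e d ts]
theorem TermInterp.vals_liftTs (I : TermInterp D) (e : ℕ → D) (d : D) :
    ∀ ts, I.vals (insertAt 0 d e) (liftTs 0 ts) = I.vals e ts
  | .nil => by simp only [liftTs, TermInterp.vals]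
  | .cons t ts => by simp only [liftTs, TermInterp.vals, I.val_liftT e d t, I.vals_liftTs e d ts]
end

/-- Satisfaction of a formula under the assignment `e`. -/
def Interp.Sat (I : Interp D) : (ℕ → D) → Fm → Prop
  | e, .atom p ts => I.pred p (I.vals e ts)
  | e, .and A B => I.Sat e A ∧ I.Sat e B
  | e, .or A B => I.Sat e A ∨ I.Sat e B
  | e, .imp A B => I.Sat e A → I.Sat e B
  | e, .not A => ¬ I.Sat e A
  | e, .all A => ∀ d ∈ I.dom, I.Sat (insertAt 0 d e) A
  | e, .ex A => ∃ d ∈ I.dom, I.Sat (insertAt 0 d e) A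

theorem Interp.sat_subF (I : Interp D) (k : ℕ) (u : Tm) (A : Fm) (e : ℕ → D) :
    I.Sat e (subF k u A) ↔ I.Sat (insertAt k (I.val e u) e) A := by
  induction A using Fm.rec (motive_1 := fun _ => True) (motive_2 := fun _ => True)
    generalizing k u e <;>
    simp_all only [subF, Interp.Sat, TermInterp.vals_subTs, TermInterp.val_liftT,
      insertAt_succ_insertAt_zero]

theorem Interp.sat_inst0 (I : Interp D) (A : Fm) (t : Tm) (e : ℕ → D) :
    I.Sat e (inst0 A t) ↔ I.Sat (insertAt 0 (I.val e t) e) A :=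
  I.sat_subF 0 t A e

end Semantics

/-! ## Soundness of derivations without strong quantifier inferences -/

theorem exists_mem_append {α : Type*} {p : α → Prop} {l l' : List α} :
    (∃ x ∈ l ++ l', p x) ↔ (∃ x ∈ l, p x) ∨ ∃ x ∈ l', p x := by
  simp only [List.mem_append, or_and_right, exists_or]

namespace Deriv

/-- The terms instantiated by the weak quantifier inferences of a derivation. -/
def witnesses : ∀ {Γ Δ}, Deriv Γ Δ → List Tm
  | _, _, ax _ => []
  | _, _, andL _ _ _ _ d => d.witnesses
  | _, _, andR _ _ _ _ _ _ d e => d.witnesses ++ e.witnesses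
  | _, _, orL _ _ _ _ _ _ d e => d.witnesses ++ e.witnesses
  | _, _, orR _ _ _ _ d => d.witnesses
  | _, _, impL _ _ _ _ _ _ d e => d.witnesses ++ e.witnesses
  | _, _, impR _ _ _ _ d => d.witnesses
  | _, _, notL _ _ _ d => d.witnesses
  | _, _, notR _ _ _ d => d.witnesses
  | _, _, wL _ _ _ d => d.witnesses
  | _, _, wR _ _ _ d => d.witnesses
  | _, _, cL _ _ _ d => d.witnesses
  | _, _, cR _ _ _ d => d.witnesses
  | _, _, cut _ _ _ _ _ d e => d.witnesses ++ e.witnesses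
  | _, _, allL t _ _ _ d => t :: d.witnesses
  | _, _, allR _ _ _ _ d => d.witnesses
  | _, _, exL _ _ _ _ d => d.witnesses
  | _, _, exR t _ _ _ d => t :: d.witnesses
  | _, _, permL _ _ _ _ d => d.witnesses
  | _, _, permR _ _ _ _ d => d.witnesses

variable {Γ Δ : List Fm}

theorem length_witnesses_le_size (d : Deriv Γ Δ) : d.witnesses.length ≤ d.size := by
  induction d <;> simp only [witnesses, size, List.length_append, List.length_cons,
    List.length_nil] <;> omega

/-- Every formula of a cut-free derivation is a subformula instance of the end-sequent, with the
same polarity, so a strong quantifier inference would leave a strong quantifier there. -/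
theorem strongs_eq_nil (d : Deriv Γ Δ) (hcut : d.cutFms = []) (hw : WeakSeq Γ Δ) :
    d.strongs = [] := by
  induction d with
  | permL _ _ _ hp _ ih => exact ih hcut ⟨fun A hA => hw.1 A (hp.subset hA), hw.2⟩
  | permR _ _ _ hp _ ih => exact ih hcut ⟨hw.1, fun A hA => hw.2 A (hp.subset hA)⟩
  | _ =>
    simp_all [WeakSeq, cutFms, strongs, inst0, posW, negW, posW_subF, negW_subF]

theorem sound {D : Type*} (I : Interp D) (e : ℕ → D) (d : Deriv Γ Δ) (hd : d.strongs = [])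
    (hdom : ∀ t ∈ d.witnesses, I.val e t ∈ I.dom) (hΓ : ∀ A ∈ Γ, I.Sat e A) :
    ∃ B ∈ Δ, I.Sat e B := by
  induction d with
  | ax A => exact ⟨A, by simp, hΓ A (by simp)⟩
  | allL t A Γ Δ d ih =>
    simp only [witnesses, List.forall_mem_cons, Interp.Sat] at hdom hΓ
    refine ih hd hdom.2 ?_
    simpa only [List.forall_mem_cons, I.sat_inst0] using ⟨hΓ.1 _ hdom.1, hΓ.2⟩
  | exR t A Γ Δ d ih =>
    simp only [witnesses, List.forall_mem_cons] at hdom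
    have := ih hd hdom.2 hΓ
    simp only [List.exists_mem_cons_iff, I.sat_inst0, Interp.Sat] at this ⊢
    exact this.imp_left fun hA => ⟨_, hdom.1, hA⟩
  | allR | exL => simp [strongs] at hd
  | permL Γ Γ' Δ hp d ih => exact ih hd hdom fun A hA => hΓ A (hp.subset hA)
  | permR Γ Δ Δ' hp d ih =>
    obtain ⟨B, hB, hsat⟩ := ih hd hdom hΓ
    exact ⟨B, hp.subset hB, hsat⟩
  | _ =>
    simp only [witnesses, strongs, List.append_eq_nil_iff, List.forall_mem_cons,
      List.forall_mem_append, List.exists_mem_cons_iff, exists_mem_append, Interp.Sat] at *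
    grind only

end Deriv

/-! ## The sequents -/

/-- The constant `0`, which is also the code of a true statement. -/
def zeroTm : Tm := .func 0 .nil

/-- The successor function. -/
def succTm (t : Tm) : Tm := .func 1 (.cons t .nil)

/-- The code of the statement `z = y + 2 ^ x`. -/
def addPowTm (y x z : Tm) : Tm := .func 2 (.cons y (.cons x (.cons z .nil)))

/-- The code of the statement `a → b ∧ c`, where `a`, `b` and `c` are codes. -/
def condTm (a b c : Tm) : Tm := .func 3 (.cons a (.cons b (.cons c .nil)))

/-- The truth predicate: the statement coded by `a` holds. -/
def TrueFm (a : Tm) : Fm := .atom 0 (.cons a .nil)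

/-- The statement that `x` is the exponential tower of height `k`. -/
def TowerFm (k x : Tm) : Fm := .atom 1 (.cons k (.cons x .nil))

/-- The `n`-th numeral. -/
def numeral : ℕ → Tm
  | 0 => zeroTm
  | n + 1 => succTm (numeral n)

/-- `y + 2 ^ 0 = y + 1`. -/
def addPowZeroAx : Fm := .all (TrueFm (addPowTm (.bvar 0) zeroTm (succTm (.bvar 0))))

/-- If `w = y + 2 ^ x` and `z = w + 2 ^ x`, then `z = y + 2 ^ (x + 1)`. -/
def addPowSuccAx : Fm :=
  .all (.all (.all (.all
    (.imp (TrueFm (addPowTm (.bvar 3) (.bvar 2) (.bvar 1)))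
      (.imp (TrueFm (addPowTm (.bvar 1) (.bvar 2) (.bvar 0)))
        (TrueFm (addPowTm (.bvar 3) (succTm (.bvar 2)) (.bvar 0))))))))

/-- Introduction of a coded conditional. -/
def condIntroAx : Fm :=
  .all (.all (.all
    (.imp (.imp (TrueFm (.bvar 2)) (.and (TrueFm (.bvar 1)) (TrueFm (.bvar 0))))
      (TrueFm (condTm (.bvar 2) (.bvar 1) (.bvar 0))))))

/-- Elimination of a coded conditional. -/
def condElimAx : Fm :=
  .all (.all (.all
    (.imp (TrueFm (condTm (.bvar 2) (.bvar 1) (.bvar 0)))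
      (.imp (TrueFm (.bvar 2)) (.and (TrueFm (.bvar 1)) (TrueFm (.bvar 0)))))))

/-- The tower of height `0` is `0`. -/
def towerZeroAx : Fm := TowerFm zeroTm zeroTm

/-- If `x` is the tower of height `k` and `y = 0 + 2 ^ x`, then `y` is the tower of height
`k + 1`. -/
def towerSuccAx : Fm :=
  .all (.all (.all
    (.imp (TowerFm (.bvar 2) (.bvar 1))
      (.imp (TrueFm (addPowTm zeroTm (.bvar 1) (.bvar 0)))
        (TowerFm (succTm (.bvar 2)) (.bvar 0))))))

/-- The code `0` is true. -/
def trueZeroAx : Fm := TrueFm zeroTm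

/-- The antecedent of the sequents: Orevkov's theory of `z = y + 2 ^ x`, extended by codes
of statements. -/
def orevkovAxs : List Fm :=
  [addPowZeroAx, addPowSuccAx, condIntroAx, condElimAx, towerZeroAx, towerSuccAx, trueZeroAx]

/-- The succedent of the `n`-th sequent: there is an exponential tower of height `n`. -/
def goal (n : ℕ) : Fm := .ex (TowerFm (numeral n) (.bvar 0))

theorem noEpsT_numeral (n : ℕ) : noEpsT (numeral n) = true := by
  induction n with
  | zero => rfl
  | succ n ih => simp only [numeral, succTm, noEpsT, noEpsTs, ih, Bool.and_true]

theorem foSeq_orevkovAxs_goal (n : ℕ) : FOSeq orevkovAxs [goal n] := by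
  refine ⟨by simp only [orevkovAxs, List.forall_mem_cons]; decide, ?_⟩
  simp [goal, TowerFm, isFO, noEpsF, noEpsTs, noEpsT, noEpsT_numeral]

theorem weakSeq_orevkovAxs_goal (n : ℕ) : WeakSeq orevkovAxs [goal n] :=
  ⟨by simp only [orevkovAxs, List.forall_mem_cons]; decide, by simp [goal, TowerFm, posW]⟩

theorem szT_numeral (n : ℕ) : szT (numeral n) = n + 1 := by
  induction n with
  | zero => rfl
  | succ n ih => simp only [numeral, succTm, szT, szTs, ih]; omega

theorem subT_numeral (k : ℕ) (u : Tm) (n : ℕ) : subT k u (numeral n) = numeral n := by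
  induction n with
  | zero => rfl
  | succ n ih => simp only [numeral, succTm, subT, subTs, ih]

theorem polyBdd_seqSize :
    PolyBdd fun n => seqSize (orevkovAxs.map epsT) ([goal n].map epsT) := by
  have seqSize_concat (Γ : List Fm) (B : Fm) : seqSize Γ [B] = seqSize Γ [] + szF B := by
    induction Γ with
    | nil => simp [seqSize]
    | cons A Γ ih => simp only [seqSize, List.cons_append, List.foldr_cons] at ih ⊢; omega
  have szF_goal (n : ℕ) : szF (epsT (goal n)) = 2 * n + 6 := by
    simp [goal, TowerFm, epsT, inst0, subF, subTs, subT, subT_numeral, szF, szTs, szT,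
      szT_numeral]
    ring
  refine ⟨2 * .X + .C (6 + seqSize (orevkovAxs.map epsT) []), fun n => ?_⟩
  simp only [List.map_cons, List.map_nil, seqSize_concat, szF_goal]
  generalize seqSize (orevkovAxs.map epsT) [] = c
  simp
  omega

/-! ## The lower bound for cut-free LK-proofs -/

/-- The objects of the intended interpretation: numbers which also code statements. The statement
coded by an object speaks about a set of numbers which is kept as a parameter, because it will be
determined by a derivation. -/
structure Obj where
  num : ℕ
  claim : Set ℕ → Prop

/-- The intended interpretation of terms. The statement `z = y + 2 ^ x` is strengthened by the
demand that the numbers from `y` up to `z` belong to the parameter set. -/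
def towerTermInterp : TermInterp Obj where
  func
    | 0, [] => ⟨0, fun _ => True⟩
    | 1, [a] => ⟨a.num + 1, fun _ => False⟩
    | 2, [y, x, z] => ⟨0, fun V => z.num = y.num + 2 ^ x.num ∧ Set.Ico y.num z.num ⊆ V⟩
    | 3, [a, b, c] => ⟨0, fun V => a.claim V → b.claim V ∧ c.claim V⟩
    | _, _ => ⟨0, fun _ => False⟩
  fvar _ := ⟨0, fun _ => False⟩
  eps := ⟨0, fun _ => False⟩

/-- The interpretation of formulas whose quantifiers range over `R`: truth is relative to the
numbers in `R`, and a tower is demanded to have all smaller numbers in `R`. -/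
def towerInterp (R : Set Obj) : Interp Obj where
  toTermInterp := towerTermInterp
  pred
    | 0, [a] => a.claim (Obj.num '' R)
    | 1, [k, x] => x.num = iterExp k.num 0 ∧ Set.Iio x.num ⊆ Obj.num '' R
    | _, _ => False
  dom := R

theorem num_val_numeral (e : ℕ → Obj) (n : ℕ) : (towerTermInterp.val e (numeral n)).num = n := by
  induction n with
  | zero => rfl
  | succ n ih => exact congrArg (· + 1) ih

/-- The demand on `R` is met at `addPowZeroAx`, whose instance puts `y` into `R`, and is inherited
by the other formulas. -/
theorem sat_orevkovAxs (R : Set Obj) (e : ℕ → Obj) : ∀ A ∈ orevkovAxs, (towerInterp R).Sat e A := by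
  simp only [orevkovAxs, List.forall_mem_cons]
  refine ⟨?_, ?_, ?_, ?_, ?_, ?_, ?_, by simp⟩
  · intro y hy
    refine ⟨rfl, fun m hm => ⟨y, hy, ?_⟩⟩
    exact le_antisymm hm.1 (Nat.lt_succ_iff.1 hm.2)
  · rintro y - x - w - z - ⟨(hw : w.num = y.num + 2 ^ x.num), hyw⟩
      ⟨(hz : z.num = w.num + 2 ^ x.num), hwz⟩
    have hyz : Set.Ico y.num z.num ⊆ Set.Ico y.num w.num ∪ Set.Ico w.num z.num :=
      Set.Ico_subset_Ico_union_Ico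
    have hz : z.num = y.num + 2 ^ (x.num + 1) := by rw [hz, hw, pow_succ]; ring
    exact ⟨hz, hyz.trans (Set.union_subset hyw hwz)⟩
  · exact fun a _ b _ c _ h => h
  · exact fun a _ b _ c _ h => h
  · exact ⟨rfl, fun m hm => absurd hm (Nat.not_lt_zero m)⟩
  · rintro k - x - y - ⟨(hx : x.num = iterExp k.num 0), -⟩ ⟨(hy : y.num = 0 + 2 ^ x.num), hR⟩
    have hy : y.num = iterExp (k.num + 1) 0 := by rw [hy, hx, zero_add, iterExp]
    exact ⟨hy, fun m hm => hR ⟨Nat.zero_le m, hm⟩⟩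
  · trivial

theorem Iio_iterExp_subset_of_sat_goal {R : Set Obj} {e : ℕ → Obj} {n : ℕ}
    (h : (towerInterp R).Sat e (goal n)) : Set.Iio (iterExp n 0) ⊆ Obj.num '' R := by
  obtain ⟨x, -, hx, hR⟩ := h
  have hx : x.num = iterExp n 0 :=
    hx.trans (congrArg (iterExp · 0) (num_val_numeral _ n))
  exact hx ▸ hR

theorem iterExp_le_size {n : ℕ} (d : Deriv orevkovAxs [goal n]) (hcut : d.cutFms = []) :
    iterExp n 0 ≤ d.size := by
  let e : ℕ → Obj := fun _ => towerTermInterp.eps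
  let values := d.witnesses.map (towerTermInterp.val e)
  obtain ⟨B, hB, hsat⟩ := d.sound (towerInterp {x | x ∈ values}) e
    (d.strongs_eq_nil hcut (weakSeq_orevkovAxs_goal n))
    (fun t ht => List.mem_map_of_mem ht) (sat_orevkovAxs _ e)
  obtain rfl := List.mem_singleton.1 hB
  have hcover : Finset.range (iterExp n 0) ⊆ (values.map Obj.num).toFinset := by
    intro m hm
    simpa using Iio_iterExp_subset_of_sat_goal hsat (Finset.mem_range.1 hm)
  calc iterExp n 0 = (Finset.range (iterExp n 0)).card := (Finset.card_range _).symm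
    _ ≤ (values.map Obj.num).toFinset.card := Finset.card_le_card hcover
    _ ≤ (values.map Obj.num).length := List.toFinset_card_le _
    _ = d.witnesses.length := by simp only [values, List.length_map]
    _ ≤ d.size := d.length_witnesses_le_size

/-! ## The growth of exponential towers -/

theorem iterExp_add (k m n : ℕ) : iterExp (k + m) n = iterExp k (iterExp m n) := by
  induction k with
  | zero => rw [Nat.zero_add, iterExp]
  | succ k ih => rw [Nat.succ_add, iterExp, iterExp, ih]

theorem iterExp_strictMono (k : ℕ) : StrictMono (iterExp k) := by
  induction k with
  | zero => exact strictMono_id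
  | succ k ih => exact (pow_right_strictMono₀ one_lt_two).comp ih

theorem two_mul_le_iterExp_zero {m : ℕ} (hm : 4 ≤ m) : 2 * m ≤ iterExp m 0 := by
  induction m, hm using Nat.le_induction with
  | base => decide
  | succ m hm ih => calc
      2 * (m + 1) ≤ 2 * 2 ^ m := by have := m.lt_two_pow_self; omega
      _ = 2 ^ (m + 1) := by ring
      _ ≤ 2 ^ iterExp m 0 := Nat.pow_le_pow_right two_pos (by omega)

theorem not_isElementary_iterExp_zero : ¬ IsElementary fun n => iterExp n 0 := by
  rintro ⟨k, hk⟩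
  have hlt : k + (k + 4) < iterExp (k + 4) 0 :=
    lt_of_lt_of_le (by omega) (two_mul_le_iterExp_zero (by omega : 4 ≤ k + 4))
  have hle : iterExp k (iterExp (k + 4) 0) ≤ iterExp k (k + (k + 4)) :=
    iterExp_add k (k + 4) 0 ▸ hk (k + (k + 4))
  exact hle.not_gt (iterExp_strictMono k hlt)

theorem IsElementary.mono {f g : ℕ → ℕ} (hg : IsElementary g) (hfg : ∀ n, f n ≤ g n) :
    IsElementary f :=
  let ⟨k, hk⟩ := hg
  ⟨k, fun n => (hfg n).trans (hk n)⟩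

/-! ## Cut-free Lε-proofs -/

/-- There is a cut-free Lε-proof of `Γ ⊢ Δ` of size at most `n`. -/
def CutFree (n : ℕ) (Γ Δ : List Fm) : Prop := ∃ e : EDeriv Γ Δ, e.cutFms = [] ∧ e.size ≤ n

namespace CutFree

variable {m n : ℕ} {Γ Γ₁ Γ₂ Δ Δ₁ Δ₂ : List Fm} {A B : Fm}

theorem mono (hmn : m ≤ n) : CutFree m Γ Δ → CutFree n Γ Δ
  | ⟨e, he, hs⟩ => ⟨e, he, hs.trans hmn⟩

theorem ax (p : ℕ) (ts : Tms) : CutFree 1 [.atom p ts] [.atom p ts] :=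
  ⟨.ax p ts, rfl, le_rfl⟩

theorem permL (hp : Γ₁.Perm Γ₂) : CutFree n Γ₁ Δ → CutFree (n + 1) Γ₂ Δ
  | ⟨e, he, hs⟩ => ⟨.permL _ _ _ hp e, he, Nat.succ_le_succ hs⟩

theorem weakL (A : Fm) : CutFree n Γ Δ → CutFree (n + 1) (A :: Γ) Δ
  | ⟨e, he, hs⟩ => ⟨.wL A _ _ e, he, Nat.succ_le_succ hs⟩

theorem contrL : CutFree n (A :: A :: Γ) Δ → CutFree (n + 1) (A :: Γ) Δ
  | ⟨e, he, hs⟩ => ⟨.cL A _ _ e, he, Nat.succ_le_succ hs⟩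

theorem andL : CutFree n (A :: B :: Γ) Δ → CutFree (n + 1) (.and A B :: Γ) Δ
  | ⟨e, he, hs⟩ => ⟨.andL A B _ _ e, he, Nat.succ_le_succ hs⟩

theorem andR : CutFree m Γ₁ (A :: Δ₁) → CutFree n Γ₂ (B :: Δ₂) →
    CutFree (m + n + 1) (Γ₁ ++ Γ₂) (.and A B :: (Δ₁ ++ Δ₂))
  | ⟨d, hd, hm⟩, ⟨e, he, hn⟩ =>
    ⟨.andR A B _ _ _ _ d e, List.append_eq_nil_iff.2 ⟨hd, he⟩, Nat.succ_le_succ (add_le_add hm hn)⟩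

theorem impL : CutFree m Γ₁ (A :: Δ₁) → CutFree n (B :: Γ₂) Δ₂ →
    CutFree (m + n + 1) (.imp A B :: (Γ₁ ++ Γ₂)) (Δ₁ ++ Δ₂)
  | ⟨d, hd, hm⟩, ⟨e, he, hn⟩ =>
    ⟨.impL A B _ _ _ _ d e, List.append_eq_nil_iff.2 ⟨hd, he⟩, Nat.succ_le_succ (add_le_add hm hn)⟩

theorem impR : CutFree n (A :: Γ) (B :: Δ) → CutFree (n + 1) Γ (.imp A B :: Δ)
  | ⟨e, he, hs⟩ => ⟨.impR A B _ _ e, he, Nat.succ_le_succ hs⟩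

theorem allL (t : Tm) :
    CutFree n (inst0 A t :: Γ) Δ → CutFree (n + 1) (inst0 A (.eps (.not A)) :: Γ) Δ
  | ⟨e, he, hs⟩ => ⟨.allL t A _ _ e, he, Nat.succ_le_succ hs⟩

theorem exR (t : Tm) : CutFree n Γ (inst0 A t :: Δ) → CutFree (n + 1) Γ (inst0 A (.eps A) :: Δ)
  | ⟨e, he, hs⟩ => ⟨.exR t A _ _ e, he, Nat.succ_le_succ hs⟩

theorem weakL_append (h : CutFree n Γ Δ) : ∀ Γ', CutFree (n + Γ'.length) (Γ' ++ Γ) Δ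
  | [] => h
  | A :: Γ' => (h.weakL_append Γ').weakL A

theorem contr_of_mem (hA : A ∈ Γ) (h : CutFree n (A :: Γ) Δ) : CutFree (n + 3) Γ Δ := by
  obtain ⟨Γ₁, Γ₂, rfl⟩ := List.append_of_mem hA
  exact ((h.permL (List.perm_middle.cons A)).contrL).permL List.perm_middle.symm

theorem contr_of_subset (hsub : Γ₁ ⊆ Γ₂) (h : CutFree n (Γ₁ ++ Γ₂) Δ) :
    CutFree (n + 3 * Γ₁.length) Γ₂ Δ := by
  induction Γ₁ generalizing n with
  | nil => exact h
  | cons A Γ ih =>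
    obtain ⟨hA, hΓ⟩ := List.cons_subset.1 hsub
    exact (ih hΓ (h.contr_of_mem (List.mem_append_right Γ hA))).mono
      (by rw [List.length_cons]; omega)

end CutFree

/-! ## Entailment with a count of logical inferences -/

/-- A bound for the size of a cut-free Lε-proof with `n` logical inferences whose end-sequent has
an antecedent of length `l`. A branch collects at most `2 * n` further antecedent formulas, and
each inference is accompanied by at most three structural inferences per antecedent formula. -/
def sizeBound (n l : ℕ) : ℕ := n * (3 * (l + 2 * n) + 5)

theorem sizeBound_mono {m n : ℕ} (l : ℕ) (hmn : m ≤ n) : sizeBound m l ≤ sizeBound n l := by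
  unfold sizeBound
  gcongr

theorem sizeBound_add_add_le {k m n l l₁ l₂ : ℕ} (h₁ : l₁ ≤ l + 2) (h₂ : l₂ ≤ l + 2)
    (hk : k ≤ 3 * l + 5) : sizeBound m l₁ + sizeBound n l₂ + k ≤ sizeBound (m + n + 1) l :=
  calc m * (3 * (l₁ + 2 * m) + 5) + n * (3 * (l₂ + 2 * n) + 5) + k
    _ ≤ m * (3 * (l + 2 + 2 * (m + n)) + 5) + n * (3 * (l + 2 + 2 * (m + n)) + 5)
          + (3 * (l + 2 + 2 * (m + n)) + 5) := by gcongr <;> omega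
    _ = (m + n + 1) * (3 * (l + 2 * (m + n + 1)) + 5) := by ring

theorem sizeBound_add_le {k n l l' : ℕ} (hl : l' ≤ l + 2) (hk : k ≤ 3 * l + 5) :
    sizeBound n l' + k ≤ sizeBound (n + 1) l := by
  simpa [sizeBound] using sizeBound_add_add_le (m := 0) hl hl hk

/-- In every context which extends `Γ` and the theory `T`, the formula `C` has a cut-free Lε-proof
within the size bound for `n` logical inferences. Quantifying over the contexts makes structural
rules and the use of members of `T` free of charge. -/
def Entails (T : List Fm) (n : ℕ) (Γ : List Fm) (C : Fm) : Prop :=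
  ∀ Γ', T ⊆ Γ' → Γ ⊆ Γ' → CutFree (sizeBound n Γ'.length) Γ' [C]

namespace Entails

variable {T Γ Γ₁ Γ₂ : List Fm} {m n : ℕ} {A B C : Fm}

theorem mono (hmn : m ≤ n) (h : Entails T m Γ C) : Entails T n Γ C :=
  fun Γ' hT hΓ => (h Γ' hT hΓ).mono (sizeBound_mono _ hmn)

theorem of_subset (hsub : Γ₁ ⊆ Γ₂) (h : Entails T n Γ₁ C) : Entails T n Γ₂ C :=
  fun Γ' hT hΓ => h Γ' hT (List.Subset.trans hsub hΓ)

theorem of_mem (hA : A ∈ Γ) (h : Entails T n (A :: Γ) C) : Entails T n Γ C :=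
  h.of_subset (List.cons_subset.2 ⟨hA, List.Subset.refl Γ⟩)

theorem of_mem_theory (hA : A ∈ T) (h : Entails T n (A :: Γ) C) : Entails T n Γ C :=
  fun Γ' hT hΓ => h Γ' hT (List.cons_subset.2 ⟨hT hA, hΓ⟩)

theorem ax {p : ℕ} {ts : Tms} (h : .atom p ts ∈ Γ) : Entails T (n + 1) Γ (.atom p ts) := by
  intro Γ' _ hΓ
  have hweak := ((CutFree.ax p ts).weakL_append Γ').permL (List.perm_append_singleton _ Γ')
  exact (hweak.contr_of_mem (hΓ h)).mono (by unfold sizeBound; nlinarith)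

theorem andL (h : Entails T n (A :: B :: Γ) C) : Entails T (n + 1) (.and A B :: Γ) C := by
  intro Γ' hT hΓ
  obtain ⟨hAB, hΓ⟩ := List.cons_subset.1 hΓ
  have hprem := h (A :: B :: Γ')
    (List.subset_cons_of_subset _ (List.subset_cons_of_subset _ hT))
    (List.cons_subset_cons _ (List.cons_subset_cons _ hΓ))
  exact (hprem.andL.contr_of_mem hAB).mono (sizeBound_add_le le_rfl (by omega : 1 + 3 ≤ _))

theorem andR (hA : Entails T m Γ A) (hB : Entails T n Γ B) :
    Entails T (m + n + 1) Γ (.and A B) := by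
  intro Γ' hT hΓ
  have hconcl := (hA Γ' hT hΓ).andR (hB Γ' hT hΓ)
  have hsize := sizeBound_add_add_le (m := m) (n := n) (Nat.le_add_right Γ'.length 2)
    (Nat.le_add_right Γ'.length 2) (by omega : 1 + 3 * Γ'.length ≤ _)
  exact (hconcl.contr_of_subset (List.Subset.refl Γ')).mono (by omega)

theorem impL (hA : Entails T m Γ A) (hB : Entails T n (B :: Γ) C) :
    Entails T (m + n + 1) (.imp A B :: Γ) C := by
  intro Γ' hT hΓ
  obtain ⟨hAB, hΓ⟩ := List.cons_subset.1 hΓ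
  have hconcl := (hA Γ' hT hΓ).impL
    (hB (B :: Γ') (List.subset_cons_of_subset _ hT) (List.cons_subset_cons _ hΓ))
  have hcontr := hconcl.contr_of_mem (List.mem_append_left Γ' hAB)
  have hsize := sizeBound_add_add_le (m := m) (n := n) (Nat.le_add_right Γ'.length 2)
    (Nat.le_succ (Γ'.length + 1)) (by omega : 1 + 3 + 3 * Γ'.length ≤ _)
  exact (hcontr.contr_of_subset (List.Subset.refl Γ')).mono (by rw [List.length_cons]; omega)

theorem impR (h : Entails T n (A :: Γ) B) : Entails T (n + 1) Γ (.imp A B) := by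
  intro Γ' hT hΓ
  have hprem := h (A :: Γ') (List.subset_cons_of_subset _ hT) (List.cons_subset_cons _ hΓ)
  exact hprem.impR.mono (sizeBound_add_le (by simp) (by omega))

theorem allL (t : Tm) (h : Entails T n (inst0 A t :: Γ) C) :
    Entails T (n + 1) (inst0 A (.eps (.not A)) :: Γ) C := by
  intro Γ' hT hΓ
  obtain ⟨hA, hΓ⟩ := List.cons_subset.1 hΓ
  have hprem := h (inst0 A t :: Γ') (List.subset_cons_of_subset _ hT) (List.cons_subset_cons _ hΓ)
  exact ((hprem.allL t).contr_of_mem hA).mono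
    (sizeBound_add_le (by simp) (by omega : 1 + 3 ≤ _))

theorem exR (t : Tm) (h : Entails T n Γ (inst0 A t)) :
    Entails T (n + 1) Γ (inst0 A (.eps A)) :=
  fun Γ' hT hΓ => ((h Γ' hT hΓ).exR t).mono (sizeBound_add_le (by omega) (by omega))

end Entails

/-! ## Short cut-free Lε-proofs -/

@[simp] theorem subT_zeroTm (k : ℕ) (u : Tm) : subT k u zeroTm = zeroTm := rfl

@[simp] theorem subT_succTm (k : ℕ) (u t : Tm) : subT k u (succTm t) = succTm (subT k u t) := rfl

@[simp] theorem subT_addPowTm (k : ℕ) (u y x z : Tm) :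
    subT k u (addPowTm y x z) = addPowTm (subT k u y) (subT k u x) (subT k u z) := rfl

@[simp] theorem subT_condTm (k : ℕ) (u a b c : Tm) :
    subT k u (condTm a b c) = condTm (subT k u a) (subT k u b) (subT k u c) := rfl

@[simp] theorem subF_TrueFm (k : ℕ) (u a : Tm) : subF k u (TrueFm a) = TrueFm (subT k u a) := rfl

@[simp] theorem subF_TowerFm (k : ℕ) (u m x : Tm) :
    subF k u (TowerFm m x) = TowerFm (subT k u m) (subT k u x) := rfl

@[simp] theorem epsT_TrueFm (a : Tm) : epsT (TrueFm a) = TrueFm a := rfl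

@[simp] theorem epsT_TowerFm (k x : Tm) : epsT (TowerFm k x) = TowerFm k x := rfl

/-- The instance of a prenex universal formula at a list of terms, the first term being put for the
outermost variable; terms without a matching quantifier are ignored. -/
def instAll : List Tm → Fm → Fm
  | t :: ts, .all A => instAll ts (inst0 A t)
  | _, A => A

/-- The theory over which the Lε-proofs work. -/
abbrev epsOrevkovAxs : List Fm := orevkovAxs.map epsT

namespace Entails

variable {T Γ : List Fm} {m n : ℕ} {A C : Fm} {a b c k x y z w : Tm}

theorem ax_TrueFm (h : TrueFm a ∈ Γ) : Entails T (n + 1) Γ (TrueFm a) := ax h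

theorem ax_TowerFm (h : TowerFm k x ∈ Γ) : Entails T (n + 1) Γ (TowerFm k x) := ax h

theorem instAll_left (ts : List Tm) (h : Entails T n (epsT (instAll ts A) :: Γ) C) :
    Entails T (n + ts.length) (epsT A :: Γ) C := by
  fun_induction instAll ts A with
  | case1 t ts A ih =>
    rw [epsT]
    refine allL t ?_
    rw [inst0, ← epsT_subF]
    exact ih h
  | case2 => exact h.mono (Nat.le_add_right _ _)

/-- In the absence of cut, the axioms are put to use as left rules. -/
theorem of_axiom (hA : A ∈ orevkovAxs) (ts : List Tm)
    (h : Entails epsOrevkovAxs n (epsT (instAll ts A) :: Γ) C) :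
    Entails epsOrevkovAxs (n + ts.length) Γ C :=
  of_mem_theory (List.mem_map_of_mem hA) (h.instAll_left ts)

theorem addPow_zero (y : Tm)
    (h : Entails epsOrevkovAxs n (TrueFm (addPowTm y zeroTm (succTm y)) :: Γ) C) :
    Entails epsOrevkovAxs (n + 1) Γ C := by
  refine of_axiom (A := addPowZeroAx) (by simp [orevkovAxs]) [y] ?_
  simpa [addPowZeroAx, instAll, inst0, subT] using h

theorem addPow_succ (hw : TrueFm (addPowTm y x w) ∈ Γ) (hz : TrueFm (addPowTm w x z) ∈ Γ)
    (h : Entails epsOrevkovAxs n (TrueFm (addPowTm y (succTm x) z) :: Γ) C) :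
    Entails epsOrevkovAxs (n + 8) Γ C := by
  have himp := impL (ax_TrueFm (n := 0) hw) (impL (ax_TrueFm (n := 0) hz) h)
  refine of_axiom (n := n + 4) (A := addPowSuccAx) (by simp [orevkovAxs]) [y, x, w, z] ?_
  simpa [addPowSuccAx, instAll, inst0, subF, subT, epsT, subT_liftT_self,
    subT_succ_liftT (Nat.zero_le _)] using himp.mono (by omega)

theorem condIntro (hbc : Entails epsOrevkovAxs m (TrueFm a :: Γ) (.and (TrueFm b) (TrueFm c)))
    (h : Entails epsOrevkovAxs n (TrueFm (condTm a b c) :: Γ) C) :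
    Entails epsOrevkovAxs (m + n + 5) Γ C := by
  have himp := impL (impR hbc) h
  refine of_axiom (n := m + n + 2) (A := condIntroAx) (by simp [orevkovAxs]) [a, b, c] ?_
  simpa [condIntroAx, instAll, inst0, subF, subT, epsT, subT_liftT_self,
    subT_succ_liftT (Nat.zero_le _)] using himp.mono (by omega)

theorem condElim (habc : TrueFm (condTm a b c) ∈ Γ) (ha : TrueFm a ∈ Γ)
    (h : Entails epsOrevkovAxs n (TrueFm b :: TrueFm c :: Γ) C) :
    Entails epsOrevkovAxs (n + 8) Γ C := by
  have himp := impL (ax_TrueFm (n := 0) habc) (impL (ax_TrueFm (n := 0) ha) (andL h))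
  refine of_axiom (n := n + 5) (A := condElimAx) (by simp [orevkovAxs]) [a, b, c] ?_
  simpa [condElimAx, instAll, inst0, subF, subT, epsT, subT_liftT_self,
    subT_succ_liftT (Nat.zero_le _)] using himp.mono (by omega)

theorem tower_zero (h : Entails epsOrevkovAxs n (TowerFm zeroTm zeroTm :: Γ) C) :
    Entails epsOrevkovAxs n Γ C :=
  of_axiom (A := towerZeroAx) (by simp [orevkovAxs]) [] h

theorem tower_succ (hx : TowerFm k x ∈ Γ) (hz : TrueFm (addPowTm zeroTm x z) ∈ Γ)
    (h : Entails epsOrevkovAxs n (TowerFm (succTm k) z :: Γ) C) :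
    Entails epsOrevkovAxs (n + 7) Γ C := by
  have himp := impL (ax_TowerFm (n := 0) hx) (impL (ax_TrueFm (n := 0) hz) h)
  refine of_axiom (n := n + 4) (A := towerSuccAx) (by simp [orevkovAxs]) [k, x, z] ?_
  simpa [towerSuccAx, instAll, inst0, subF, subT, epsT, subT_liftT_self,
    subT_succ_liftT (Nat.zero_le _)] using himp.mono (by omega)

theorem true_zero (h : Entails epsOrevkovAxs n (TrueFm zeroTm :: Γ) C) :
    Entails epsOrevkovAxs n Γ C :=
  of_axiom (A := trueZeroAx) (by simp [orevkovAxs]) [] h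

end Entails

/-- The code `a x` depends on `x` by substitution only: `a` is a coded unary predicate. -/
def CommutesWithSubst (a : Tm → Tm) : Prop := ∀ k u x, subT k u (a x) = a (subT k u x)

/-- The formula `a(z) ∧ z = y + 2 ^ x` with `z` as `.bvar 0`. -/
def extFm (a : Tm → Tm) (y x : Tm) : Fm :=
  .and (TrueFm (a (.bvar 0))) (TrueFm (addPowTm (liftT 0 y) (liftT 0 x) (.bvar 0)))

/-- The `ε`-term which stands for the `z` in `∃ z, a(z) ∧ z = y + 2 ^ x`. -/
def extWit (a : Tm → Tm) (y x : Tm) : Tm := .eps (extFm a y x)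

/-- The code of `a(y) → ∃ z, a(z) ∧ z = y + 2 ^ x`. -/
def extCode (a : Tm → Tm) (y x : Tm) : Tm :=
  condTm (a y) (a (extWit a y x)) (addPowTm y x (extWit a y x))

/-- The formula `a(y) → ∃ z, a(z) ∧ z = y + 2 ^ x` with `y` as `.bvar 0`. -/
def extCexFm (a : Tm → Tm) (x : Tm) : Fm := TrueFm (extCode a (.bvar 0) (liftT 0 x))

/-- The `ε`-term which stands for the `y` in `∀ y, a(y) → ∃ z, a(z) ∧ z = y + 2 ^ x`. -/
def extCex (a : Tm → Tm) (x : Tm) : Tm := .eps (.not (extCexFm a x))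

/-- The code of `∀ y, a(y) → ∃ z, a(z) ∧ z = y + 2 ^ x`. -/
def nextCode (a : Tm → Tm) (x : Tm) : Tm := extCode a (extCex a x) x

/-- The codes of Orevkov's formulas: `A₀(x)` is true and `Aᵢ₊₁(x)` is
`∀ y, Aᵢ(y) → ∃ z, Aᵢ(z) ∧ z = y + 2 ^ x`. -/
def orevkovCode : ℕ → Tm → Tm
  | 0 => fun _ => zeroTm
  | i + 1 => nextCode (orevkovCode i)

namespace CommutesWithSubst

variable {a : Tm → Tm}

theorem subT_extWit (ha : CommutesWithSubst a) (k : ℕ) (u y x : Tm) :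
    subT k u (extWit a y x) = extWit a (subT k u y) (subT k u x) := by
  simp [extWit, extFm, subT, subF, ha _ _ _, subT_succ_liftT (Nat.zero_le k)]

theorem subT_extCode (ha : CommutesWithSubst a) (k : ℕ) (u y x : Tm) :
    subT k u (extCode a y x) = extCode a (subT k u y) (subT k u x) := by
  simp [extCode, ha.subT_extWit, ha _ _ _]

theorem subT_extCex (ha : CommutesWithSubst a) (k : ℕ) (u x : Tm) :
    subT k u (extCex a x) = extCex a (subT k u x) := by
  simp [extCex, extCexFm, subT, subF, ha.subT_extCode, subT_succ_liftT (Nat.zero_le k)]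

theorem nextCode (ha : CommutesWithSubst a) : CommutesWithSubst (nextCode a) := fun k u x => by
  simp only [EpsCalc.nextCode, ha.subT_extCode, ha.subT_extCex]

theorem inst0_extFm (ha : CommutesWithSubst a) (y x s : Tm) :
    inst0 (extFm a y x) s = .and (TrueFm (a s)) (TrueFm (addPowTm y x s)) := by
  simp [inst0, extFm, subF, subT, ha _ _ _, subT_liftT_self]

theorem inst0_extCexFm (ha : CommutesWithSubst a) (x s : Tm) :
    inst0 (extCexFm a x) s = TrueFm (extCode a s x) := by
  simp [inst0, extCexFm, subT, ha.subT_extCode, subT_liftT_self]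

end CommutesWithSubst

theorem commutesWithSubst_orevkovCode (i : ℕ) : CommutesWithSubst (orevkovCode i) := by
  induction i with
  | zero => exact fun _ _ _ => rfl
  | succ i ih => exact ih.nextCode

namespace Entails

variable {Γ : List Fm} {m n : ℕ} {C : Fm} {a : Tm → Tm} {x t : Tm}

theorem nextCode_elim (ha : CommutesWithSubst a) (hx : TrueFm (nextCode a x) ∈ Γ)
    (ht : TrueFm (a t) ∈ Γ)
    (h : Entails epsOrevkovAxs n
      (TrueFm (a (extWit a t x)) :: TrueFm (addPowTm t x (extWit a t x)) :: Γ) C) :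
    Entails epsOrevkovAxs (n + 9) Γ C := by
  have hcond : Entails epsOrevkovAxs (n + 8) (inst0 (extCexFm a x) t :: Γ) C := by
    rw [ha.inst0_extCexFm]
    refine condElim List.mem_cons_self (List.mem_cons_of_mem _ ht) (h.of_subset ?_)
    exact List.cons_subset_cons _ (List.cons_subset_cons _ (List.subset_cons_self _ _))
  refine of_mem hx ?_
  have hall := allL t hcond
  rwa [ha.inst0_extCexFm] at hall

theorem nextCode_intro (ha : CommutesWithSubst a)
    (hext : ∀ y, ∃ s, Entails epsOrevkovAxs m (TrueFm (a y) :: Γ) (TrueFm (a s)) ∧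
      Entails epsOrevkovAxs m (TrueFm (a y) :: Γ) (TrueFm (addPowTm y x s)))
    (h : Entails epsOrevkovAxs n (TrueFm (nextCode a x) :: Γ) C) :
    Entails epsOrevkovAxs (2 * m + n + 7) Γ C := by
  obtain ⟨s, hs, hpow⟩ := hext (extCex a x)
  have hex := andR hs hpow
  rw [← ha.inst0_extFm] at hex
  replace hex := exR s hex
  rw [ha.inst0_extFm] at hex
  exact (condIntro hex h).mono (by omega)

/-- From `y` one reaches `y + 2 ^ (x + 1)` by adding `2 ^ x` twice. -/
theorem orevkovCode_succTm (i : ℕ) (hx : TrueFm (orevkovCode i x) ∈ Γ)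
    (h : Entails epsOrevkovAxs n (TrueFm (orevkovCode i (succTm x)) :: Γ) C) :
    Entails epsOrevkovAxs (n + 61) Γ C := by
  cases i with
  | zero => exact (of_mem hx h).mono (Nat.le_add_right n 61)
  | succ i =>
    have ha := commutesWithSubst_orevkovCode i
    refine (nextCode_intro (m := 27) ha (fun y => ?_) h).mono (by omega)
    have hx' : TrueFm (nextCode (orevkovCode i) x) ∈ Γ := hx
    set w := extWit (orevkovCode i) y x
    set z := extWit (orevkovCode i) w x
    have hext {D} (hD : Entails epsOrevkovAxs 9 (TrueFm (orevkovCode i z) ::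
        TrueFm (addPowTm w x z) :: TrueFm (orevkovCode i w) :: TrueFm (addPowTm y x w) ::
        TrueFm (orevkovCode i y) :: Γ) D) :
        Entails epsOrevkovAxs 27 (TrueFm (orevkovCode i y) :: Γ) D :=
      nextCode_elim (t := y) ha (by simp [hx']) (by simp)
        (nextCode_elim (t := w) ha (by simp [hx']) (by simp [w]) hD)
    exact ⟨z, hext (ax_TrueFm (by simp)),
      hext (addPow_succ (y := y) (x := x) (w := w) (z := z) (by simp) (by simp)
        (ax_TrueFm (by simp)))⟩

theorem orevkovCode_zeroTm (i : ℕ)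
    (h : Entails epsOrevkovAxs n (TrueFm (orevkovCode i zeroTm) :: Γ) C) :
    Entails epsOrevkovAxs (n + 131) Γ C := by
  cases i with
  | zero => exact (true_zero h).mono (Nat.le_add_right n 131)
  | succ i =>
    refine (nextCode_intro (m := 62) (commutesWithSubst_orevkovCode i) (fun y => ?_) h).mono
      (by omega)
    exact ⟨succTm y, orevkovCode_succTm (x := y) i (by simp) (ax_TrueFm (n := 0) (by simp)),
      addPow_zero y (ax_TrueFm (by simp))⟩

theorem tower_goal (n k i : ℕ) (x : Tm) (hki : k + i = n) (hk : TowerFm (numeral k) x ∈ Γ)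
    (hi : TrueFm (orevkovCode i x) ∈ Γ) :
    Entails epsOrevkovAxs (147 * i + 2) Γ (epsT (goal n)) := by
  induction i generalizing k x Γ with
  | zero =>
    subst hki
    refine exR (A := TowerFm (numeral k) (.bvar 0)) x ?_
    simpa [inst0, subT, subT_numeral] using ax_TowerFm hk
  | succ i ih =>
    refine orevkovCode_zeroTm (n := 147 * i + 2 + 7 + 9) i ?_
    refine nextCode_elim (commutesWithSubst_orevkovCode i) (List.mem_cons_of_mem _ hi)
      List.mem_cons_self ?_
    refine tower_succ (k := numeral k) (x := x) (by simp [hk])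
      (List.mem_cons_of_mem _ List.mem_cons_self) ?_
    exact ih (k + 1) _ (by omega) List.mem_cons_self (by simp)

theorem nil_goal (n : ℕ) : Entails epsOrevkovAxs (147 * n + 133) [] (epsT (goal n)) := by
  refine orevkovCode_zeroTm n (tower_zero ?_)
  exact tower_goal n 0 n zeroTm (zero_add n) List.mem_cons_self (by simp)

end Entails

theorem exists_polynomial_size_le :
    ∃ q : Polynomial ℕ, ∀ n, ∃ e : EDeriv (orevkovAxs.map epsT) ([goal n].map epsT),
      e.cutFms = [] ∧ e.size ≤ q.eval n := by
  have hsize (n : ℕ) : sizeBound (147 * n + 133) orevkovAxs.length =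
      (147 * n + 133) * (882 * n + 824) := by
    simp only [sizeBound, orevkovAxs, List.length_cons, List.length_nil]
    ring
  refine ⟨(147 * .X + .C 133) * (882 * .X + .C 824), fun n => ?_⟩
  obtain ⟨e, hcut, he⟩ := Entails.nil_goal n _ (List.Subset.refl _) (List.nil_subset _)
  refine ⟨e, hcut, he.trans (le_of_eq ?_)⟩
  simpa using hsize n

/-- There is a sequence of cut-free Lε-proofs of end-sequents
`S i` such that: (1) the size of `S i` is polynomial in `i`; (2) each `S i` is
the epsilon translation of a first-order sequent `S' i` with weak quantifiers
only; (3) the size of these cut-free Lε-proofs is polynomially bounded in `i`;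
(4) no elementary function of `i` bounds the size of the smallest cut-free
LK-proofs of `S' i`.  Hence cut-free Lε-proofs give a non-elementary speed-up
over cut-free LK-proofs. -/
theorem leps_speedup_over_lk :
    ∃ S' : ℕ → List Fm × List Fm,
      -- (2) S_i is the epsilon translation of the first-order sequent S'_i,
      -- which contains weak quantifiers only
      (∀ i, FOSeq (S' i).1 (S' i).2 ∧ WeakSeq (S' i).1 (S' i).2) ∧
      -- (1) the size of S_i = [S'_i]^ε is polynomial in i
      (∃ p : Polynomial ℕ,
        ∀ i, seqSize ((S' i).1.map epsT) ((S' i).2.map epsT) ≤ p.eval i) ∧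
      -- (3) cut-free Lε-proofs of S_i of polynomial size
      (∃ q : Polynomial ℕ,
        ∀ i, ∃ e : EDeriv ((S' i).1.map epsT) ((S' i).2.map epsT),
          e.cutFms = [] ∧ e.size ≤ q.eval i) ∧
      -- (4) no elementary bound on cut-free LK-proofs of S'_i
      (∀ f : ℕ → ℕ, IsElementary f →
        ¬ ∀ i, ∃ d : Deriv (S' i).1 (S' i).2,
            d.Std ∧ d.cutFms = [] ∧ d.size ≤ f i) := by
  refine ⟨fun i => (orevkovAxs, [goal i]),
    fun i => ⟨foSeq_orevkovAxs_goal i, weakSeq_orevkovAxs_goal i⟩,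
    polyBdd_seqSize, exists_polynomial_size_le, fun f hf h => ?_⟩
  refine not_isElementary_iterExp_zero (hf.mono fun i => ?_)
  obtain ⟨d, -, hcut, hsize⟩ := h i
  exact (iterExp_le_size d hcut).trans hsize

end EpsCalc
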